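/- Let r ∈ ℝ and F, K, T ∈ ℝ with F > 0, K > 0, T > 0, and let f be the complex Black-Scholes call price. Then the singularity of f at σ = ∞ is essential: for the function g(z) := f(1/z) on ℂ \ {0}, there is no c ∈ ℂ such that g(z) tends to c as z → 0 within ℂ \ {0}, and ‖g(z)‖ does not tend to +∞ as z → 0 within ℂ \ {0}. -/

import Mathlib

/-!
`Phi` is bounded on the real line (Gaussian integrability), so the Black-Scholes price is bounded for
real `σ`, and its norm cannot tend to `+∞` at infinity. On the imaginary axis, `Phi (x * I)` has real
part `1 / 2` and imaginary part `(2π)^{-1/2} ∫₀¹ x exp((t x)² / 2) dt`, which is odd in `x` and at least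
`(2π)^{-1/2} x` for `x ≥ 0`. For `σ = y * I` with `y → +∞`, the points `dPlus` and `dMinus` go to `∞`
along the two opposite imaginary half-axes, so oddness and the minus sign in the price make the two
terms reinforce each other: the imaginary part of the price tends to `+∞`, which excludes a
finite limit.
-/

open Complex intervalIntegral

/-- The analytic extension of the standard normal CDF to the complex plane:
`Φ(z) = 1/2 + (2π)^{-1/2} ∫_{t=0}^{1} z · exp(−(t·z)²/2) dt`. -/
noncomputable def Phi (z : ℂ) : ℂ :=
  1 / 2 + ((Real.sqrt (2 * Real.pi))⁻¹ : ℂ) *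
    ∫ t in (0:ℝ)..1, z * Complex.exp (-((t : ℂ) * z) ^ 2 / 2)


/-- `d₊(σ) = log(F/K)/(σ√T) + σ√T/2`. -/
noncomputable def dPlus (F K T : ℝ) (σ : ℂ) : ℂ :=
  (Real.log (F / K) : ℂ) / (σ * (Real.sqrt T : ℂ)) + σ * (Real.sqrt T : ℂ) / 2

/-- `d₋(σ) = log(F/K)/(σ√T) − σ√T/2`. -/
noncomputable def dMinus (F K T : ℝ) (σ : ℂ) : ℂ :=
  (Real.log (F / K) : ℂ) / (σ * (Real.sqrt T : ℂ)) - σ * (Real.sqrt T : ℂ) / 2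

/-- The complex Black-Scholes call price
`f(σ) = e^{−rT}·(F·Φ(d₊(σ)) − K·Φ(d₋(σ)))`. -/
noncomputable def BS (r F K T : ℝ) (σ : ℂ) : ℂ :=
  (Real.exp (-(r * T)) : ℂ) * ((F : ℂ) * Phi (dPlus F K T σ) - (K : ℂ) * Phi (dMinus F K T σ))

lemma Phi_neg (z : ℂ) : Phi (-z) = 1 - Phi z := by
  have h : ∀ t : ℝ, -z * Complex.exp (-((t : ℂ) * -z) ^ 2 / 2)
      = -(z * Complex.exp (-((t : ℂ) * z) ^ 2 / 2)) := by
    intro t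
    rw [show (-((t : ℂ) * -z) ^ 2 / 2) = -((t : ℂ) * z) ^ 2 / 2 by ring]
    ring
  unfold Phi
  simp_rw [h]
  rw [intervalIntegral.integral_neg]
  ring

/-- `Phi` is bounded on the real line: after substituting `u = t x`, the integral is dominated by
the Gaussian integral over `ℝ`. -/
lemma exists_norm_Phi_ofReal_le : ∃ C : ℝ, ∀ x : ℝ, ‖Phi (x : ℂ)‖ ≤ C := by
  have hint : MeasureTheory.Integrable (fun u : ℝ => Real.exp (-(1 / 2) * u ^ 2)) :=
    integrable_exp_neg_mul_sq (by norm_num)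
  refine ⟨1 / 2 + (Real.sqrt (2 * Real.pi))⁻¹ * ∫ u : ℝ, Real.exp (-(1 / 2) * u ^ 2), fun x => ?_⟩
  have h1 : (∫ t in (0:ℝ)..1, (x : ℂ) * Complex.exp (-((t : ℂ) * x) ^ 2 / 2))
      = ((∫ u in (0:ℝ)..x, Real.exp (-(1 / 2) * u ^ 2) : ℝ) : ℂ) := by
    have h2 := intervalIntegral.mul_integral_comp_mul_right
      (a := 0) (b := 1) (f := fun u : ℝ => Real.exp (-(1 / 2) * u ^ 2)) (c := x)
    rw [zero_mul, one_mul] at h2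
    rw [← h2, ← intervalIntegral.integral_const_mul, ← intervalIntegral.integral_ofReal]
    congr 1
    ext t
    push_cast
    congr 2
    ring
  have h3 : |∫ u in (0:ℝ)..x, Real.exp (-(1 / 2) * u ^ 2)|
      ≤ ∫ u : ℝ, Real.exp (-(1 / 2) * u ^ 2) := by
    refine (intervalIntegral.norm_integral_le_integral_norm_uIoc
      (f := fun u : ℝ => Real.exp (-(1 / 2) * u ^ 2)) (μ := MeasureTheory.volume)).trans ?_
    simp only [Real.norm_eq_abs, Real.abs_exp]
    exact MeasureTheory.setIntegral_le_integral hint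
      (Filter.Eventually.of_forall fun u => (Real.exp_pos _).le)
  unfold Phi
  rw [h1]
  refine (norm_add_le _ _).trans ?_
  rw [norm_mul, norm_inv, Complex.norm_real, Complex.norm_real, Real.norm_eq_abs, Real.norm_eq_abs,
    abs_of_nonneg (Real.sqrt_nonneg _)]
  have : ‖(1 / 2 : ℂ)‖ = 1 / 2 := by norm_num
  rw [this]
  gcongr

lemma le_im_Phi_mul_I {x : ℝ} (hx : 0 ≤ x) :
    (Real.sqrt (2 * Real.pi))⁻¹ * x ≤ (Phi (x * I)).im := by
  have h1 : (∫ t in (0:ℝ)..1, (x * I : ℂ) * Complex.exp (-((t : ℂ) * (x * I)) ^ 2 / 2))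
      = ((∫ t in (0:ℝ)..1, x * Real.exp ((t * x) ^ 2 / 2) : ℝ) : ℂ) * I := by
    rw [← intervalIntegral.integral_ofReal, ← intervalIntegral.integral_mul_const]
    congr 1
    ext t
    have : (-((t : ℂ) * (x * I)) ^ 2 / 2) = ((t : ℂ) * x) ^ 2 / 2 := by
      rw [mul_pow, mul_pow, I_sq]
      ring
    rw [this]
    push_cast
    ring
  have h2 : x ≤ ∫ t in (0:ℝ)..1, x * Real.exp ((t * x) ^ 2 / 2) := by
    have h3 : (∫ _t in (0:ℝ)..1, x) ≤ ∫ t in (0:ℝ)..1, x * Real.exp ((t * x) ^ 2 / 2) := by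
      refine intervalIntegral.integral_mono_on zero_le_one (by simp)
        (Continuous.intervalIntegrable (by fun_prop) _ _) fun t _ => ?_
      exact le_mul_of_one_le_right hx (Real.one_le_exp (by positivity))
    simpa using h3
  unfold Phi
  rw [h1, ← Complex.ofReal_inv, Complex.add_im, Complex.im_ofReal_mul, Complex.im_ofReal_mul, Complex.I_im,
    mul_one]
  have : (1 / 2 : ℂ).im = 0 := by norm_num
  rw [this, zero_add]
  gcongr

lemma dPlus_mul_I (F K T y : ℝ) : dPlus F K T (y * I) =
    ((y * (Real.sqrt T / 2) - Real.log (F / K) / Real.sqrt T * y⁻¹ : ℝ) : ℂ) * I := by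
  unfold dPlus
  push_cast
  simp only [div_eq_mul_inv, mul_inv, inv_I]
  ring

lemma dMinus_mul_I (F K T y : ℝ) : dMinus F K T (y * I) =
    -(((y * (Real.sqrt T / 2) + Real.log (F / K) / Real.sqrt T * y⁻¹ : ℝ) : ℂ) * I) := by
  unfold dMinus
  push_cast
  simp only [div_eq_mul_inv, mul_inv, inv_I]
  ring

open Filter in
lemma tendsto_im_BS_mul_I (r F K T : ℝ) (hF : 0 < F) (hK : 0 < K) (hT : 0 < T) :
    Tendsto (fun y : ℝ => (BS r F K T (y * I)).im) atTop atTop := by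
  have hs : 0 < Real.sqrt T / 2 := by positivity
  set l := Real.log (F / K) / Real.sqrt T with hl
  have hlin : Tendsto (fun y : ℝ => y * (Real.sqrt T / 2)) atTop atTop :=
    tendsto_id.atTop_mul_const hs
  have hinv : Tendsto (fun y : ℝ => l * y⁻¹) atTop (nhds 0) := by
    simpa using tendsto_inv_atTop_zero.const_mul l
  have ha : Tendsto (fun y : ℝ => y * (Real.sqrt T / 2) - l * y⁻¹) atTop atTop := by
    simpa only [sub_eq_add_neg] using hlin.atTop_add hinv.neg
  have hb : Tendsto (fun y : ℝ => y * (Real.sqrt T / 2) + l * y⁻¹) atTop atTop :=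
    hlin.atTop_add hinv
  have hc : 0 < (Real.sqrt (2 * Real.pi))⁻¹ := by positivity
  have hlow := (((ha.const_mul_atTop hc).const_mul_atTop hF).atTop_add_atTop
    ((hb.const_mul_atTop hc).const_mul_atTop hK)).const_mul_atTop (Real.exp_pos (-(r * T)))
  refine tendsto_atTop_mono' _ ?_ hlow
  filter_upwards [ha.eventually_ge_atTop 0, hb.eventually_ge_atTop 0] with y hay hby
  unfold BS
  rw [dPlus_mul_I, dMinus_mul_I, Phi_neg, ← hl, Complex.im_ofReal_mul, Complex.sub_im,
    Complex.im_ofReal_mul, Complex.im_ofReal_mul, Complex.sub_im, Complex.one_im]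
  have h1 := mul_le_mul_of_nonneg_left (le_im_Phi_mul_I hay) hF.le
  have h2 := mul_le_mul_of_nonneg_left (le_im_Phi_mul_I hby) hK.le
  exact mul_le_mul_of_nonneg_left (by linarith) (Real.exp_pos _).le

lemma exists_norm_BS_ofReal_le (r F K T : ℝ) : ∃ C : ℝ, ∀ x : ℝ, ‖BS r F K T (x : ℂ)‖ ≤ C := by
  obtain ⟨C, hC⟩ := exists_norm_Phi_ofReal_le
  refine ⟨‖(Real.exp (-(r * T)) : ℂ)‖ * (‖(F : ℂ)‖ * C + ‖(K : ℂ)‖ * C), fun x => ?_⟩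
  have hp : dPlus F K T x
      = ((Real.log (F / K) / (x * Real.sqrt T) + x * Real.sqrt T / 2 : ℝ) : ℂ) := by
    unfold dPlus
    push_cast
    rfl
  have hm : dMinus F K T x
      = ((Real.log (F / K) / (x * Real.sqrt T) - x * Real.sqrt T / 2 : ℝ) : ℂ) := by
    unfold dMinus
    push_cast
    rfl
  unfold BS
  rw [hp, hm, norm_mul]
  refine mul_le_mul_of_nonneg_left ((norm_sub_le _ _).trans ?_) (norm_nonneg _)
  rw [norm_mul, norm_mul]
  gcongr <;> exact hC _

open Filter in
/-- the singularity of the Black-Scholes price at `σ = ∞` is essential: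
for `g(z) := f(1/z)`, `g` tends to no finite limit as `z → 0` within `ℂ \ {0}`,
and `‖g(z)‖` does not tend to `+∞` there. -/
theorem BS_essential_singularity_at_infinity (r F K T : ℝ)
    (hF : 0 < F) (hK : 0 < K) (hT : 0 < T) :
    (¬ ∃ c : ℂ, Tendsto (fun z : ℂ => BS r F K T (1 / z))
        (nhdsWithin 0 {(0 : ℂ)}ᶜ) (nhds c)) ∧
    ¬ Tendsto (fun z : ℂ => ‖BS r F K T (1 / z)‖) (nhdsWithin 0 {(0 : ℂ)}ᶜ) atTop := by
  have htend : ∀ w : ℂ, w ≠ 0 → Tendsto (fun y : ℝ => ((y : ℂ) * w)⁻¹) atTop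
      (nhdsWithin 0 {(0 : ℂ)}ᶜ) := by
    intro w hw
    refine tendsto_nhdsWithin_iff.2 ⟨?_, ?_⟩
    · have h := ((Complex.continuous_ofReal.tendsto 0).comp tendsto_inv_atTop_zero).mul_const w⁻¹
      simpa [Function.comp_def, mul_comm] using h
    · filter_upwards [eventually_gt_atTop 0] with y hy
      have hy' : (y : ℂ) ≠ 0 := by exact_mod_cast hy.ne'
      exact inv_ne_zero (mul_ne_zero hy' hw)
  constructor
  · rintro ⟨c, hc⟩
    have h := (Complex.continuous_im.tendsto c).comp (hc.comp (htend I I_ne_zero))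
    simp only [Function.comp_def, one_div, inv_inv] at h
    exact not_tendsto_nhds_of_tendsto_atTop (tendsto_im_BS_mul_I r F K T hF hK hT) _ h
  · intro hinf
    obtain ⟨C, hC⟩ := exists_norm_BS_ofReal_le r F K T
    have h := hinf.comp (htend 1 one_ne_zero)
    simp only [Function.comp_def, one_div, inv_inv, mul_one] at h
    obtain ⟨y, hy⟩ := (h.eventually_gt_atTop C).exists
    exact absurd (hC y) (not_le.2 hy)
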